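/- Closed formula for count-distinct aggregation over a single relation: let D be a finite nonempty set, τ : D → ℝ, and define the utility ν(C) = |{τ(t) : t ∈ C}| (the number of distinct τ-values occurring in C). Then for every t ∈ D, Shapley(t, ν) = 1 / |{t' ∈ D : τ(t') = τ(t)}|. -/

import Mathlib

open Finset

/-!
Adding `t` to a coalition `C` raises the number of distinct values by one when no member of `C`
has the value `τ t`, and by zero otherwise. So the Shapley value of `t` is the total weight of the
coalitions contained in `B = {x ∈ D | τ x ≠ τ t}`. With `b = #B` and `#D = b + r + 1`, grouping
these coalitions by size gives `∑ k ≤ b, C(b, k) k! (b + r - k)! / (b + r + 1)!`. Since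
`C(b, k) k! (b + r - k)! = b! r! C(b - k + r, r)`, the hockey-stick identity evaluates this to
`1 / (r + 1)`, and `r + 1` is the number of elements of `D` with value `τ t`.
-/

/-- The Shapley value of player `p` in the cooperative game with player set `P`
and utility function `ν`. -/
noncomputable def shapley {α : Type*} [DecidableEq α] (P : Finset α) (ν : Finset α → ℝ)
    (p : α) : ℝ :=
  ∑ C ∈ (P.erase p).powerset,
    (((C.card.factorial * (P.card - C.card - 1).factorial : ℕ) : ℝ) / (P.card.factorial : ℝ)) *
      (ν (insert p C) - ν C)

/-- The hockey-stick identity, multiplied by `(r + 1) * b! * r!`. -/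
lemma sum_choose_mul_factorial (b r : ℕ) :
    (r + 1) * ∑ k ∈ range (b + 1), b.choose k * (k.factorial * (b + r - k).factorial) =
      (b + r + 1).factorial := by
  have h1 : ∀ k ∈ range (b + 1), b.choose k * (k.factorial * (b + r - k).factorial) =
      b.factorial * r.factorial * ((b + 1 - 1 - k) + r).choose r := by
    intro k hk
    obtain ⟨j, rfl⟩ := Nat.exists_eq_add_of_le (Nat.lt_succ_iff.mp (mem_range.mp hk))
    have e1 : k + j + r - k = j + r := by omega
    have e2 : k + j + 1 - 1 - k + r = j + r := by omega
    have h2 := Nat.add_choose_mul_factorial_mul_factorial k j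
    have h3 := Nat.add_choose_mul_factorial_mul_factorial j r
    rw [e1, e2, ← h2, ← h3, Nat.choose_symm_add]
    ring
  rw [sum_congr rfl h1, ← mul_sum, sum_range_reflect (fun i => (i + r).choose r) (b + 1),
    Nat.sum_range_add_choose]
  have h4 := Nat.add_choose_mul_factorial_mul_factorial b (r + 1)
  rw [Nat.factorial_succ r, ← add_assoc] at h4
  rw [← h4]
  ring

/-- The marginal contribution of `t` is the indicator that its value is new. -/
lemma card_image_insert_sub {α : Type*} [DecidableEq α] (τ : α → ℝ) (t : α) (C : Finset α) :
    (((insert t C).image τ).card : ℝ) - ((C.image τ).card : ℝ) =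
      if ∀ x ∈ C, τ x ≠ τ t then 1 else 0 := by
  rw [image_insert]
  split_ifs with h
  · rw [card_insert_of_notMem (by simpa using h)]
    simp
  · rw [insert_eq_of_mem (by simpa using h), sub_self]

/-- Closed formula for count-distinct aggregation over a single relation:
the Shapley value of `t` is one over the number of elements with the same
`τ`-value as `t`. -/
theorem shapley_count_distinct {α : Type*} [DecidableEq α] (D : Finset α) (hD : D.Nonempty)
    (τ : α → ℝ) (ν : Finset α → ℝ)
    (hνdef : ∀ C : Finset α, ν C = ((C.image τ).card : ℝ)) :
    ∀ t ∈ D,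
      shapley D ν t = 1 / ((D.filter fun t' => τ t' = τ t).card : ℝ) := by
  intro t ht
  set B := D.filter fun x => τ x ≠ τ t with hB
  set E := D.filter fun x => τ x = τ t with hE
  have hcard : E.card + B.card = D.card := card_filter_add_card_filter_not _
  have hEpos : 0 < E.card := card_pos.mpr ⟨t, by simp [hE, ht]⟩
  obtain ⟨r, hr⟩ : ∃ r, E.card = r + 1 := ⟨E.card - 1, by omega⟩
  have hn : D.card = B.card + r + 1 := by omega
  have hfilter : (D.erase t).powerset.filter (fun C => ∀ x ∈ C, τ x ≠ τ t) = B.powerset := by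
    ext C
    simp only [mem_filter, mem_powerset, hB, subset_iff, mem_erase]
    constructor
    · rintro ⟨h, h'⟩ x hx
      exact ⟨(h hx).2, h' x hx⟩
    · intro h
      exact ⟨fun x hx => ⟨fun e => (h hx).2 (e ▸ rfl), (h hx).1⟩, fun x hx => (h hx).2⟩
  have key := sum_choose_mul_factorial B.card r
  have hsum : ∑ C ∈ B.powerset, C.card.factorial * (D.card - C.card - 1).factorial =
      ∑ k ∈ range (B.card + 1), B.card.choose k * (k.factorial * (B.card + r - k).factorial) := by
    rw [sum_powerset_apply_card (fun k => k.factorial * (D.card - k - 1).factorial)]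
    refine sum_congr rfl fun k _ => ?_
    rw [smul_eq_mul, hn, show B.card + r + 1 - k - 1 = B.card + r - k by omega]
  unfold shapley
  simp only [hνdef, card_image_insert_sub, mul_ite, mul_one, mul_zero]
  rw [← sum_filter, hfilter, ← sum_div, ← Nat.cast_sum, hsum, hr, hn, ← key]
  have hS : (∑ k ∈ range (B.card + 1),
      B.card.choose k * (k.factorial * (B.card + r - k).factorial)) ≠ 0 := by
    intro h0
    rw [h0, mul_zero] at key
    exact (Nat.factorial_ne_zero _) key.symm
  have hS' := Nat.cast_ne_zero (R := ℝ).mpr hS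
  rw [Nat.cast_mul, mul_comm, div_mul_eq_div_div, div_self hS']
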